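/- arXiv:1808.05076 — 6 statements merged into one kernel-verified Lean document; each statement's English description precedes it below -/
import Mathlib

section
/- Let n, d ∈ ℕ and let R₀, …, R_d be linearly independent n×n complex matrices satisfying Rₖ * Rⱼ = ∑ᵢ c(k,i,j) • Rᵢ for complex constants c(k,i,j), and assume the n×n identity matrix lies in the span of R₀, …, R_d. Let M = ∑ₖ αₖ • Rₖ for complex coefficients αₖ and let ρ(M) = ∑ₖ αₖ • Pₖ be the corresponding (d+1)×(d+1) matrix. Then a complex number λ is an eigenvalue of M if and only if λ is an eigenvalue of ρ(M). In particular M has at most d+1 distinct eigenvalues. -/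
/-!
Since `1` lies in the span `S` of the `Rₖ` and products of the `Rₖ` stay in `S`, the space `S` is a
finite-dimensional algebra with basis `R`, and `ρ` is its left regular representation written in
that basis. The inclusion of `S` into the ambient algebra and `ρ` are both injective, and an
injective homomorphism out of an integral algebra creates no new inverses: an element that becomes
invertible in the target is not a zero divisor, hence was invertible already. So `M` and `ρ(M)` have
the same spectrum, namely that of `M` as an element of `S`.
-/

theorem isUnit_map_iff_of_isIntegral_of_injective (K : Type*) {A B F : Type*} [CommRing K]
    [IsArtinianRing K] [Ring A] [Algebra K A] [Algebra.IsIntegral K A] [MonoidWithZero B]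
    [FunLike F A B] [MonoidWithZeroHomClass F A B] (f : F) (hf : Function.Injective f) (a : A) :
    IsUnit (f a) ↔ IsUnit a := by
  refine ⟨fun h => ?_, fun h => h.map f⟩
  exact IsArtinianRing.isUnit_of_nonZeroDivisor_of_isIntegral' (R := K)
    (mem_nonZeroDivisors_of_injective hf h.mem_nonZeroDivisors)

theorem spectrum_map_eq_of_isIntegral_of_injective {K A B : Type*} [CommRing K]
    [IsArtinianRing K] [Ring A] [Algebra K A] [Algebra.IsIntegral K A] [Ring B] [Algebra K B]
    (f : A →ₐ[K] B) (hf : Function.Injective f) (a : A) : spectrum K (f a) = spectrum K a := by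
  ext r
  rw [spectrum.mem_iff, spectrum.mem_iff, ← isUnit_map_iff_of_isIntegral_of_injective K f hf,
    map_sub, AlgHom.commutes]

theorem spectrum_leftMulMatrix {ι K A : Type*} [Fintype ι] [DecidableEq ι] [CommRing K]
    [IsArtinianRing K] [Ring A] [Algebra K A] (b : Module.Basis ι K A) (a : A) :
    spectrum K (Algebra.leftMulMatrix b a) = spectrum K a := by
  have : Module.Finite K A := .of_basis b
  exact spectrum_map_eq_of_isIntegral_of_injective _ (Algebra.leftMulMatrix_injective b) a

theorem leftMulMatrix_eq_of_mul_basis {ι K A : Type*} [Fintype ι] [DecidableEq ι] [CommSemiring K]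
    [Semiring A] [Algebra K A] (b : Module.Basis ι K A) {a : A} {Q : Matrix ι ι K}
    (h : ∀ j, a * b j = ∑ i, Q i j • b i) : Algebra.leftMulMatrix b a = Q := by
  ext i j
  rw [Algebra.leftMulMatrix_eq_repr_mul, h, b.repr_sum_self]

theorem ncard_spectrum_matrix_le_card {ι K : Type*} [Fintype ι] [DecidableEq ι] [Field K]
    (Q : Matrix ι ι K) : (spectrum K Q).ncard ≤ Fintype.card ι := by
  have spectrum_eq_rootSet : spectrum K Q = Q.charpoly.rootSet K := by
    ext r
    rw [Matrix.mem_spectrum_iff_isRoot_charpoly,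
      Polynomial.mem_rootSet_of_ne Q.charpoly_monic.ne_zero, Polynomial.coe_aeval_eq_eval,
      Polynomial.IsRoot.def]
  calc (spectrum K Q).ncard = (Q.charpoly.rootSet K).ncard := by rw [spectrum_eq_rootSet]
    _ ≤ Q.charpoly.natDegree := Q.charpoly.ncard_rootSet_le K
    _ = Fintype.card ι := Q.charpoly_natDegree_eq_dim

section SpanSubalgebra

variable {ι K A : Type*}

/-- The linear span of a family `R` that contains `1` and all products `R k * R j`, as a
subalgebra: the domain of the representation `ρ`. -/
def spanSubalgebra [CommSemiring K] [Semiring A] [Algebra K A] (R : ι → A)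
    (hmul : ∀ k j, R k * R j ∈ Submodule.span K (Set.range R))
    (hone : 1 ∈ Submodule.span K (Set.range R)) : Subalgebra K A :=
  (Submodule.span K (Set.range R)).toSubalgebra hone fun x y hx hy => by
    have span_mul_le : Submodule.span K (Set.range R) * Submodule.span K (Set.range R) ≤
        Submodule.span K (Set.range R) := by
      rw [Submodule.span_mul_span, Submodule.span_le]
      rintro _ ⟨_, ⟨k, rfl⟩, _, ⟨j, rfl⟩, rfl⟩
      exact hmul k j
    exact span_mul_le (Submodule.mul_mem_mul hx hy)

variable [Fintype ι] [DecidableEq ι] [CommRing K] [IsArtinianRing K] [Ring A] [Algebra K A]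

theorem spectrum_sum_smul_eq_of_mul_eq_sum {R : ι → A} {P : ι → Matrix ι ι K}
    (hind : LinearIndependent K R) (hmul : ∀ k j, R k * R j = ∑ i, P k i j • R i)
    (hone : 1 ∈ Submodule.span K (Set.range R)) (α : ι → K) :
    spectrum K (∑ k, α k • R k) = spectrum K (∑ k, α k • P k) := by
  have hmem (k j : ι) : R k * R j ∈ Submodule.span K (Set.range R) :=
    hmul k j ▸ Submodule.sum_mem _ fun i _ =>
      Submodule.smul_mem _ _ (Submodule.subset_span (Set.mem_range_self i))
  let S : Subalgebra K A := spanSubalgebra R hmem hone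
  let b : Module.Basis ι K S := Module.Basis.span hind
  have val_injective : Function.Injective S.val := Subtype.val_injective
  have val_b (k : ι) : S.val (b k) = R k := Module.Basis.coe_span_apply hind k
  have : Module.Finite K S := .of_basis b
  have rho_b (k : ι) : Algebra.leftMulMatrix b (b k) = P k :=
    leftMulMatrix_eq_of_mul_basis b fun j => val_injective <| by
      simp only [map_mul, map_sum, map_smul, val_b, hmul]
  calc spectrum K (∑ k, α k • R k)
      = spectrum K (S.val (∑ k, α k • b k)) := by simp only [map_sum, map_smul, val_b]
    _ = spectrum K (∑ k, α k • b k) :=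
        spectrum_map_eq_of_isIntegral_of_injective S.val val_injective _
    _ = spectrum K (Algebra.leftMulMatrix b (∑ k, α k • b k)) :=
        (spectrum_leftMulMatrix b _).symm
    _ = spectrum K (∑ k, α k • P k) := by simp only [map_sum, map_smul, rho_b]

end SpanSubalgebra

theorem intersection_matrices_spectrum_general {ι K A : Type*} [Fintype ι] [DecidableEq ι]
    [Field K] [Ring A] [Algebra K A] {R : ι → A} {P : ι → Matrix ι ι K}
    (hind : LinearIndependent K R) (hmul : ∀ k j, R k * R j = ∑ i, P k i j • R i)
    (hone : 1 ∈ Submodule.span K (Set.range R)) (α : ι → K) :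
    (∀ lam : K, lam ∈ spectrum K (∑ k, α k • R k) ↔ lam ∈ spectrum K (∑ k, α k • P k)) ∧
    Set.Finite (spectrum K (∑ k, α k • R k)) ∧
    (spectrum K (∑ k, α k • R k)).ncard ≤ Fintype.card ι := by
  rw [spectrum_sum_smul_eq_of_mul_eq_sum hind hmul hone]
  exact ⟨fun _ => Iff.rfl, Matrix.finite_spectrum _, ncard_spectrum_matrix_le_card _⟩

/-- `λ` is an eigenvalue of `M = ∑ αₖ • Rₖ` iff it is an eigenvalue of
`ρ(M) = ∑ αₖ • Pₖ`; in particular `M` has at most `d + 1` distinct eigenvalues. -/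
theorem intersection_matrices_spectrum (n d : ℕ)
    (R : Fin (d + 1) → Matrix (Fin n) (Fin n) ℂ)
    (c : Fin (d + 1) → Fin (d + 1) → Fin (d + 1) → ℂ)
    (hind : LinearIndependent ℂ R)
    (hmul : ∀ k j, R k * R j = ∑ i, c k i j • R i)
    (hone : (1 : Matrix (Fin n) (Fin n) ℂ) ∈ Submodule.span ℂ (Set.range R))
    (P : Fin (d + 1) → Matrix (Fin (d + 1)) (Fin (d + 1)) ℂ)
    (hP : ∀ k i j, P k i j = c k i j)
    (α : Fin (d + 1) → ℂ) :
    (∀ lam : ℂ, lam ∈ spectrum ℂ (∑ k, α k • R k) ↔ lam ∈ spectrum ℂ (∑ k, α k • P k)) ∧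
    Set.Finite (spectrum ℂ (∑ k, α k • R k)) ∧
    (spectrum ℂ (∑ k, α k • R k)).ncard ≤ d + 1 := by
  simpa only [Fintype.card_fin] using
    intersection_matrices_spectrum_general hind (by simpa only [hP] using hmul) hone α
end

section
/- Let n, d ∈ ℕ and let R₀, …, R_d be linearly independent n×n complex matrices satisfying Rₖ * Rⱼ = ∑ᵢ c(k,i,j) • Rᵢ for complex constants c(k,i,j), and assume the n×n identity matrix lies in the span of R₀, …, R_d. Let M = ∑ₖ αₖ • Rₖ and ρ(M) = ∑ₖ αₖ • Pₖ. Then M is diagonalizable (over ℂ) if and only if ρ(M) is diagonalizable. -/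
/-!
The span of the `Rₖ` is a unital subalgebra with basis `R`, and `Pₖ` is the matrix, in this basis,
of left multiplication by `Rₖ`. Since the algebra is unital, its left regular representation is
faithful, so `M` and `ρ(M)` have the same minimal polynomial. A matrix is diagonalizable if and only
if its minimal polynomial is a product of distinct linear factors.
-/

open Polynomial Module

section StructureConstants

variable {K A ι : Type*} [CommRing K] [Ring A] [Algebra K A]

lemma mul_mem_span_range {R : ι → A}
    (hmul : ∀ k j, R k * R j ∈ Submodule.span K (Set.range R)) {x y : A}
    (hx : x ∈ Submodule.span K (Set.range R)) (hy : y ∈ Submodule.span K (Set.range R)) :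
    x * y ∈ Submodule.span K (Set.range R) := by
  suffices h : Submodule.span K (Set.range R) * Submodule.span K (Set.range R) ≤
      Submodule.span K (Set.range R) from h (Submodule.mul_mem_mul hx hy)
  rw [Submodule.span_mul_span, Submodule.span_le]
  rintro _ ⟨_, ⟨k, rfl⟩, _, ⟨j, rfl⟩, rfl⟩
  exact hmul k j

lemma exists_subalgebra_basis_coe_eq {R : ι → A} (hind : LinearIndependent K R)
    (hmul : ∀ k j, R k * R j ∈ Submodule.span K (Set.range R))
    (hone : (1 : A) ∈ Submodule.span K (Set.range R)) :
    ∃ (S : Subalgebra K A) (b : Basis ι K S), ∀ i, (b i : A) = R i :=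
  ⟨(Submodule.span K (Set.range R)).toSubalgebra hone fun _ _ => mul_mem_span_range hmul,
    Basis.span hind, fun i => congrArg Subtype.val (Basis.span_apply hind i)⟩

variable [Fintype ι] [DecidableEq ι]

lemma leftMulMatrix_eq_of_mul_basis_eq_sum (b : Basis ι K A) {x : A} {Q : Matrix ι ι K}
    (hx : ∀ j, x * b j = ∑ i, Q i j • b i) : Algebra.leftMulMatrix b x = Q := by
  ext i j
  rw [Algebra.leftMulMatrix_eq_repr_mul, hx, b.repr_sum_self]

theorem minpoly_sum_smul_intersection_matrices {R : ι → A} {P : ι → Matrix ι ι K}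
    (hind : LinearIndependent K R) (hmul : ∀ k j, R k * R j = ∑ i, P k i j • R i)
    (hone : (1 : A) ∈ Submodule.span K (Set.range R)) (α : ι → K) :
    minpoly K (∑ k, α k • P k) = minpoly K (∑ k, α k • R k) := by
  have hmem : ∀ k j, R k * R j ∈ Submodule.span K (Set.range R) := fun k j =>
    hmul k j ▸ sum_mem fun i _ => Submodule.smul_mem _ _ (Submodule.subset_span ⟨i, rfl⟩)
  obtain ⟨S, b, hb⟩ := exists_subalgebra_basis_coe_eq hind hmem hone
  have hP : ∀ k, Algebra.leftMulMatrix b (b k) = P k := fun k =>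
    leftMulMatrix_eq_of_mul_basis_eq_sum b fun j => Subtype.ext <| by simp [hb, hmul]
  calc minpoly K (∑ k, α k • P k)
      = minpoly K (Algebra.leftMulMatrix b (∑ k, α k • b k)) := by simp only [map_sum, map_smul, hP]
    _ = minpoly K (∑ k, α k • b k) :=
      minpoly.algHom_eq _ (Algebra.leftMulMatrix_injective b) _
    _ = minpoly K (S.val (∑ k, α k • b k)) :=
      (minpoly.algHom_eq S.val Subtype.val_injective _).symm
    _ = minpoly K (∑ k, α k • R k) := by simp only [map_sum, map_smul, Subalgebra.coe_val, hb]

end StructureConstants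

lemma eq_prod_roots_toFinset_of_monic {K : Type*} [CommRing K] [IsDomain K] [DecidableEq K]
    {p : K[X]} (hp : p.Monic) (hsplits : p.Splits) (hsep : p.Separable) :
    p = ∏ μ ∈ p.roots.toFinset, (X - C μ) := by
  rw [Finset.prod, Multiset.toFinset_val, (nodup_roots hsep).dedup]
  exact hsplits.eq_prod_roots_of_monic hp

section Eigenspaces

variable {K V : Type*} [Field K] [AddCommGroup V] [Module K V]

lemma ker_aeval_prod_X_sub_C (f : End K V) (s : Finset K) :
    LinearMap.ker (aeval f (∏ μ ∈ s, (X - C μ))) = ⨆ μ ∈ s, f.eigenspace μ := by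
  classical
  induction s using Finset.induction_on with
  | empty => simp [Module.End.one_eq_id]
  | insert μ s hμ ih =>
    have hcoprime : IsCoprime (X - C μ) (∏ ν ∈ s, (X - C ν)) :=
      IsCoprime.prod_right fun ν hν =>
        pairwise_coprime_X_sub_C Function.injective_id (ne_of_mem_of_not_mem hν hμ).symm
    rw [Finset.prod_insert hμ, ← sup_ker_aeval_eq_ker_aeval_mul_of_coprime f hcoprime, ih,
      Finset.iSup_insert, End.eigenspace_def, map_sub, aeval_X, aeval_C,
      Algebra.algebraMap_eq_smul_one]

lemma iSup_eigenspace_eq_top_of_minpoly {f : End K V}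
    (hsplits : (minpoly K f).Splits) (hsep : (minpoly K f).Separable) :
    ⨆ μ, f.eigenspace μ = ⊤ := by
  classical
  have hmonic : (minpoly K f).Monic := minpoly.monic (minpoly.ne_zero_iff.mp hsep.ne_zero)
  have hprod := eq_prod_roots_toFinset_of_monic hmonic hsplits hsep
  have hker := ker_aeval_prod_X_sub_C f (minpoly K f).roots.toFinset
  rw [← hprod, minpoly.aeval, LinearMap.ker_zero] at hker
  exact top_unique (hker.trans_le (iSup₂_le fun μ _ => le_iSup f.eigenspace μ))

lemma exists_basis_forall_mem {ι : Type*} (b : Basis ι K V) {S : Set V}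
    (hS : ⊤ ≤ Submodule.span K S) : ∃ b' : Basis ι K V, ∀ i, b' i ∈ S := by
  refine ⟨(Basis.ofSpan hS).reindex ((Basis.ofSpan hS).indexEquiv b), fun i => ?_⟩
  rw [Basis.reindex_apply]
  exact Basis.ofSpan_subset hS (Set.mem_range_self _)

lemma exists_basis_apply_eq_smul {ι : Type*} (b : Basis ι K V) {f : End K V}
    (hf : ⨆ μ, f.eigenspace μ = ⊤) :
    ∃ (b' : Basis ι K V) (D : ι → K), ∀ i, f (b' i) = D i • b' i := by
  have hspan : ⊤ ≤ Submodule.span K {v | ∃ μ : K, f v = μ • v} :=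
    hf.ge.trans <| iSup_le fun μ _ hv => Submodule.subset_span ⟨μ, End.mem_eigenspace_iff.mp hv⟩
  obtain ⟨b', hb'⟩ := exists_basis_forall_mem b hspan
  choose D hD using hb'
  exact ⟨b', D, hD⟩

end Eigenspaces

section Diagonalizable

variable {m K : Type*} [Fintype m] [DecidableEq m]

/-- A square matrix is diagonalizable if it is similar, over its own coefficient ring, to a
diagonal matrix. -/
def IsDiagonalizable [CommRing K] (A : Matrix m m K) : Prop :=
  ∃ (U : Matrix m m K) (D : m → K), IsUnit U ∧ A = U * Matrix.diagonal D * U⁻¹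

lemma isDiagonalizable_of_forall_mulVec_eq_smul [CommRing K] {A : Matrix m m K}
    (b : Basis m K (m → K)) {D : m → K} (hb : ∀ j, A.mulVec (b j) = D j • b j) :
    IsDiagonalizable A := by
  let U := (Pi.basisFun K m).toMatrix b
  let _ : Invertible U := (Pi.basisFun K m).invertibleToMatrix b
  have hAU : A * U = U * Matrix.diagonal D := by
    ext i j
    rw [Matrix.mul_diagonal, mul_comm]
    exact congrFun (hb j) i
  exact ⟨U, D, isUnit_of_invertible U, by rw [← hAU, Matrix.mul_inv_cancel_right_of_invertible]⟩

lemma IsDiagonalizable.exists_aeval_prod_X_sub_C_eq_zero [CommRing K] {A : Matrix m m K}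
    (hA : IsDiagonalizable A) : ∃ s : Finset K, aeval A (∏ μ ∈ s, (X - C μ)) = 0 := by
  classical
  obtain ⟨_, D, ⟨u, rfl⟩, rfl⟩ := hA
  let φ : (m → K) →ₐ[K] Matrix m m K :=
    (MulSemiringAction.toAlgEquiv K (Matrix m m K) (ConjAct.toConjAct u)).toAlgHom.comp
      (Matrix.diagonalAlgHom K)
  have hφ : (u : Matrix m m K) * Matrix.diagonal D * (u : Matrix m m K)⁻¹ = φ D := by
    rw [← Matrix.coe_units_inv]
    rfl
  have hD : aeval D (∏ μ ∈ Finset.univ.image D, (X - C μ)) = 0 := by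
    ext i
    rw [aeval_fn_apply, coe_aeval_eq_eval, eval_prod]
    exact Finset.prod_eq_zero (Finset.mem_image_of_mem D (Finset.mem_univ i))
      (by rw [eval_sub, eval_X, eval_C, sub_self])
  exact ⟨Finset.univ.image D, by rw [hφ, aeval_algHom_apply, hD, map_zero]⟩

theorem isDiagonalizable_iff_minpoly [Field K] {A : Matrix m m K} :
    IsDiagonalizable A ↔ (minpoly K A).Splits ∧ (minpoly K A).Separable := by
  constructor
  · intro hA
    obtain ⟨s, hs⟩ := hA.exists_aeval_prod_X_sub_C_eq_zero
    have hdvd : minpoly K A ∣ ∏ μ ∈ s, (X - C μ) := minpoly.dvd K A hs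
    have hsep : (∏ μ ∈ s, (X - C μ)).Separable :=
      separable_prod_X_sub_C_iff'.mpr fun _ _ _ _ h => h
    exact ⟨(Splits.prod fun μ _ => Splits.X_sub_C μ).of_dvd hsep.ne_zero hdvd, hsep.of_dvd hdvd⟩
  · rintro ⟨hsplits, hsep⟩
    rw [← Matrix.minpoly_toLin'] at hsplits hsep
    obtain ⟨b, D, hb⟩ := exists_basis_apply_eq_smul (Pi.basisFun K m)
      (iSup_eigenspace_eq_top_of_minpoly hsplits hsep)
    exact isDiagonalizable_of_forall_mulVec_eq_smul b hb

end Diagonalizable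

theorem intersection_matrices_diagonalizable_general {K m ι : Type*} [Field K] [Fintype m]
    [DecidableEq m] [Fintype ι] [DecidableEq ι] {R : ι → Matrix m m K} {P : ι → Matrix ι ι K}
    (hind : LinearIndependent K R) (hmul : ∀ k j, R k * R j = ∑ i, P k i j • R i)
    (hone : (1 : Matrix m m K) ∈ Submodule.span K (Set.range R)) (α : ι → K) :
    IsDiagonalizable (∑ k, α k • R k) ↔ IsDiagonalizable (∑ k, α k • P k) := by
  rw [isDiagonalizable_iff_minpoly, isDiagonalizable_iff_minpoly,
    minpoly_sum_smul_intersection_matrices hind hmul hone]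

/-- `M = ∑ αₖ • Rₖ` is diagonalizable over `ℂ` iff `ρ(M) = ∑ αₖ • Pₖ` is. -/
theorem intersection_matrices_diagonalizable (n d : ℕ)
    (R : Fin (d + 1) → Matrix (Fin n) (Fin n) ℂ)
    (c : Fin (d + 1) → Fin (d + 1) → Fin (d + 1) → ℂ)
    (hind : LinearIndependent ℂ R)
    (hmul : ∀ k j, R k * R j = ∑ i, c k i j • R i)
    (hone : (1 : Matrix (Fin n) (Fin n) ℂ) ∈ Submodule.span ℂ (Set.range R))
    (P : Fin (d + 1) → Matrix (Fin (d + 1)) (Fin (d + 1)) ℂ)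
    (hP : ∀ k i j, P k i j = c k i j)
    (α : Fin (d + 1) → ℂ) :
    (∃ (U : Matrix (Fin n) (Fin n) ℂ) (D : Fin n → ℂ),
        IsUnit U ∧ (∑ k, α k • R k) = U * Matrix.diagonal D * U⁻¹) ↔
    (∃ (V : Matrix (Fin (d + 1)) (Fin (d + 1)) ℂ) (D' : Fin (d + 1) → ℂ),
        IsUnit V ∧ (∑ k, α k • P k) = V * Matrix.diagonal D' * V⁻¹) :=
  intersection_matrices_diagonalizable_general hind (by simpa only [hP] using hmul) hone α
end

section
/- In the Johnson scheme J(N,2) with N ≥ 4, let α₁, α₂ be real numbers such that the three quantities λ₀ = 1 + 2(N−2)α₁ + ((N−2)(N−3)/2)α₂, λ₁ = 1 + (N−4)α₁ − (N−3)α₂, and λ₂ = 1 − 2α₁ + α₂ are all nonnegative. Then there exist real numbers β₀, β₁, β₂ such that the matrix S = β₀ • R0 + β₁ • R1 + β₂ • R2 is positive semidefinite and satisfies S² = R0 + α₁ • R1 + α₂ • R2; i.e., the positive semidefinite square root of the covariance matrix lies in the span of R0, R1, R2. -/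
/-- Edges of the complete undirected graph on `N` vertices: 2-element subsets of `Fin N`. -/
abbrev JohnsonEdge (N : ℕ) := {s : Finset (Fin N) // s.card = 2}

/-- Adjacency matrix of the `k`-th relation of the Johnson scheme `J(N,2)`:
entry 1 iff the two edges share exactly `2 - k` vertices. -/
def JohnsonR (N k : ℕ) : Matrix (JohnsonEdge N) (JohnsonEdge N) ℝ :=
  fun x y => if (x.1 ∩ y.1).card = 2 - k then 1 else 0

/-!
The vertex–edge incidence matrix `B` of the complete graph satisfies `Bᵀ B = (N - 2) I + J`. Hence
the eigenspaces of the scheme are the constants, the image under `B` of the vectors on the vertices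
with zero sum, and the orthogonal complement of the two. The projections `E₀, E₁, E₂` onto them have
the same span as `R₀, R₁, R₂`, the given matrix is `λ₀ E₀ + λ₁ E₁ + λ₂ E₂`, and its positive
semidefinite square root is `√λ₀ E₀ + √λ₁ E₁ + √λ₂ E₂`.
-/

open Matrix

section Idempotents

variable {ι R A : Type*}

theorem sum_smul_mul_sum_smul_of_orthogonalIdempotents [Fintype ι] [CommSemiring R] [Semiring A]
    [Algebra R A] {e : ι → A} (he : OrthogonalIdempotents e) (a b : ι → R) :
    (∑ i, a i • e i) * ∑ i, b i • e i = ∑ i, (a i * b i) • e i := by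
  classical
  simp [Finset.sum_mul, Finset.mul_sum, he.mul_eq, smul_smul, mul_comm]

theorem completeOrthogonalIdempotents_triple [Ring R] {e f : R} (he : IsIdempotentElem e)
    (hf : IsIdempotentElem f) (hef : e * f = 0) (hfe : f * e = 0) :
    CompleteOrthogonalIdempotents ![e, f, 1 - (e + f)] := by
  refine CompleteOrthogonalIdempotents.iff_ortho_complete.2 ⟨fun i j hij ↦ ?_, ?_⟩
  · fin_cases i <;> fin_cases j <;>
      simp_all [mul_sub, sub_mul, mul_add, add_mul, he.eq, hf.eq]
  · simp [Fin.sum_univ_three]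

end Idempotents

section Projections

variable {ι m n 𝕜 : Type*} [Fintype m] [Fintype n]

open scoped MatrixOrder ComplexOrder in
theorem posSemidef_sum_smul_of_isStarProjection [Fintype ι] [RCLike 𝕜] {e : ι → Matrix n n 𝕜}
    (he : ∀ i, IsStarProjection (e i)) {c : ι → ℝ} (hc : ∀ i, 0 ≤ c i) :
    (∑ i, c i • e i).PosSemidef :=
  posSemidef_sum _ fun i _ ↦ (nonneg_iff_posSemidef.1 (he i).nonneg).smul (hc i)

theorem isStarProjection_inv_smul_mul_mul_conjTranspose [Field 𝕜] [StarRing 𝕜] {P : Matrix n n 𝕜}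
    (hP : IsStarProjection P) {B : Matrix m n 𝕜} {c : 𝕜} (hc : IsSelfAdjoint c)
    (h : P * (Bᴴ * B) * P = c • P) : IsStarProjection (c⁻¹ • (B * P * Bᴴ)) where
  isIdempotentElem := by
    have hsq : B * P * Bᴴ * (B * P * Bᴴ) = c • (B * P * Bᴴ) := by
      calc B * P * Bᴴ * (B * P * Bᴴ) = B * (P * (Bᴴ * B) * P) * Bᴴ := by
            simp only [Matrix.mul_assoc]
        _ = c • (B * P * Bᴴ) := by rw [h, Matrix.mul_smul, Matrix.smul_mul]
    rw [IsIdempotentElem, smul_mul_smul_comm, hsq, smul_smul]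
    congr 1
    field
  isSelfAdjoint :=
    ((isHermitian_mul_mul_conjTranspose B hP.isSelfAdjoint).smul hc.inv₀).isSelfAdjoint

end Projections

section Averaging

variable {m n : Type*} [Fintype m] [Fintype n]

variable (n) in
/-- The averaging operator on real functions on a finite type `n`, that is, the orthogonal
projection onto the constant functions; it is the normalized all-ones matrix `vecMulVec 1 1`. -/
noncomputable def averagingMatrix : Matrix n n ℝ := (Fintype.card n : ℝ)⁻¹ • vecMulVec 1 1

theorem card_smul_averagingMatrix :
    (Fintype.card n : ℝ) • averagingMatrix n = vecMulVec 1 1 := by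
  cases isEmpty_or_nonempty n
  · exact Subsingleton.elim _ _
  · exact smul_inv_smul₀ (by simp) _

theorem one_vecMul_averagingMatrix : (1 : n → ℝ) ᵥ* averagingMatrix n = 1 := by
  cases isEmpty_or_nonempty n
  · exact Subsingleton.elim _ _
  · rw [averagingMatrix, vecMul_smul, vecMul_vecMulVec]
    ext
    simp

theorem isStarProjection_averagingMatrix : IsStarProjection (averagingMatrix n) where
  isIdempotentElem := by
    nth_rw 1 [IsIdempotentElem, averagingMatrix]
    rw [Matrix.smul_mul, vecMulVec_mul, one_vecMul_averagingMatrix, averagingMatrix]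
  isSelfAdjoint := by
    rw [IsSelfAdjoint, star_eq_conjTranspose, averagingMatrix, conjTranspose_smul,
      conjTranspose_vecMulVec, star_trivial, star_one]

theorem one_vecMul_one_sub_averagingMatrix [DecidableEq n] :
    (1 : n → ℝ) ᵥ* (1 - averagingMatrix n) = 0 := by
  rw [vecMul_sub, vecMul_one, one_vecMul_averagingMatrix, sub_self]

theorem averagingMatrix_mul_mul_one_sub_averagingMatrix [DecidableEq n] {B : Matrix m n ℝ} {r : ℝ}
    (hB : 1 ᵥ* B = r • 1) : averagingMatrix m * (B * (1 - averagingMatrix n)) = 0 := by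
  rw [averagingMatrix, Matrix.smul_mul, vecMulVec_mul, ← vecMul_vecMul, hB, smul_vecMul,
    one_vecMul_one_sub_averagingMatrix, smul_zero]
  simp

end Averaging

section Incidence

variable (N : ℕ)

/-- The edge–vertex incidence matrix of the complete graph on `Fin N`. -/
def johnsonIncidence : Matrix (JohnsonEdge N) (Fin N) ℝ := fun x v ↦ if v ∈ x.1 then 1 else 0

theorem johnsonIncidence_mulVec_one : johnsonIncidence N *ᵥ 1 = (2 : ℝ) • 1 := by
  ext x
  simp [johnsonIncidence, mulVec, dotProduct, x.2]

variable {N} in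
theorem johnsonEdge_eq_pair_iff {u v : Fin N} (huv : u ≠ v) (x : JohnsonEdge N) :
    x = ⟨{u, v}, Finset.card_pair huv⟩ ↔ u ∈ x.1 ∧ v ∈ x.1 := by
  constructor
  · rintro rfl
    simp
  · rintro ⟨hu, hv⟩
    have hsub : {u, v} ⊆ x.1 := by simp [Finset.insert_subset_iff, hu, hv]
    exact Subtype.ext (Finset.eq_of_subset_of_card_le hsub (by rw [x.2, Finset.card_pair huv])).symm

variable {N} in
theorem johnsonIncidence_transpose_mul_self_apply_of_ne {u v : Fin N} (huv : u ≠ v) :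
    ((johnsonIncidence N)ᵀ * johnsonIncidence N) u v = 1 := by
  simp [mul_apply, johnsonIncidence, ← ite_and, ← johnsonEdge_eq_pair_iff huv.symm]

variable {N} in
theorem johnsonIncidence_transpose_mul_self_apply_self (u : Fin N) :
    ((johnsonIncidence N)ᵀ * johnsonIncidence N) u u = (1 ᵥ* johnsonIncidence N) u := by
  simp [mul_apply, johnsonIncidence, vecMul, dotProduct, ← ite_and]

theorem one_vecMul_johnsonIncidence : 1 ᵥ* johnsonIncidence N = ((N : ℝ) - 1) • 1 := by
  ext u
  -- Count the pairs `(x, v)` with `u, v ∈ x` in two ways.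
  have hrow : (((johnsonIncidence N)ᵀ * johnsonIncidence N) *ᵥ 1) u =
      2 * (1 ᵥ* johnsonIncidence N) u := by
    rw [← mulVec_mulVec, johnsonIncidence_mulVec_one, mulVec_smul, mulVec_transpose]
    rfl
  have hsum : (((johnsonIncidence N)ᵀ * johnsonIncidence N) *ᵥ 1) u =
      (1 ᵥ* johnsonIncidence N) u + (N - 1) := by
    rw [mulVec, dotProduct_one, ← Finset.add_sum_erase _ _ (Finset.mem_univ u),
      johnsonIncidence_transpose_mul_self_apply_self, Finset.sum_congr rfl fun v hv ↦
        johnsonIncidence_transpose_mul_self_apply_of_ne (Finset.ne_of_mem_erase hv).symm]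
    simp [Nat.cast_sub u.pos]
  simp only [Pi.smul_apply, Pi.one_apply, smul_eq_mul, mul_one]
  linarith

theorem johnsonIncidence_transpose_mul_self :
    (johnsonIncidence N)ᵀ * johnsonIncidence N = ((N : ℝ) - 2) • 1 + vecMulVec 1 1 := by
  ext u v
  obtain rfl | huv := eq_or_ne u v
  · rw [johnsonIncidence_transpose_mul_self_apply_self, one_vecMul_johnsonIncidence]
    simp only [Pi.smul_apply, Pi.one_apply, Matrix.add_apply, Matrix.smul_apply, one_apply_eq,
      vecMulVec_apply, smul_eq_mul]
    ring
  · rw [johnsonIncidence_transpose_mul_self_apply_of_ne huv]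
    simp [huv]

theorem johnsonIncidence_mul_transpose_self_apply (x y : JohnsonEdge N) :
    (johnsonIncidence N * (johnsonIncidence N)ᵀ) x y = (x.1 ∩ y.1).card := by
  have hfilter : ({v | v ∈ y.1 ∧ v ∈ x.1} : Finset (Fin N)) = x.1 ∩ y.1 := by
    ext
    simp [and_comm]
  simp [mul_apply, johnsonIncidence, ← ite_and, hfilter]

end Incidence

section Relations

variable (N : ℕ)

variable {N} in
theorem johnsonEdge_card_inter_le (x y : JohnsonEdge N) : (x.1 ∩ y.1).card ≤ 2 :=
  (Finset.card_le_card Finset.inter_subset_left).trans x.2.le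

theorem johnsonR_zero : JohnsonR N 0 = 1 := by
  ext x y
  have hcard : (x.1 ∩ y.1).card = 2 ↔ x = y := by
    constructor
    · intro h
      have hx := Finset.eq_of_subset_of_card_le Finset.inter_subset_left (x.2.trans h.symm).le
      have hy := Finset.eq_of_subset_of_card_le Finset.inter_subset_right (y.2.trans h.symm).le
      exact Subtype.ext (hx.symm.trans hy)
    · rintro rfl
      rw [Finset.inter_self, x.2]
  simp [JohnsonR, one_apply, hcard]

theorem johnsonR_zero_add_one_add_two :
    JohnsonR N 0 + JohnsonR N 1 + JohnsonR N 2 = vecMulVec 1 1 := by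
  ext x y
  have hle := johnsonEdge_card_inter_le x y
  simp only [JohnsonR, Matrix.add_apply, vecMulVec_apply]
  interval_cases (x.1 ∩ y.1).card <;> simp

theorem johnsonIncidence_mul_transpose_self :
    johnsonIncidence N * (johnsonIncidence N)ᵀ = (2 : ℝ) • JohnsonR N 0 + JohnsonR N 1 := by
  ext x y
  have hle := johnsonEdge_card_inter_le x y
  rw [johnsonIncidence_mul_transpose_self_apply]
  simp only [JohnsonR, Matrix.add_apply, Matrix.smul_apply]
  interval_cases (x.1 ∩ y.1).card <;> simp

theorem card_johnsonEdge : (Fintype.card (JohnsonEdge N) : ℝ) = N * (N - 1) / 2 := by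
  rw [Fintype.card_finset_len, Fintype.card_fin, Nat.cast_choose_two]

end Relations

section SpectralDecomposition

variable (N : ℕ)

/-- The projection `E₁` of the Johnson scheme `J(N,2)`, onto the functions on the edges that are
induced by a function of zero sum on the vertices. -/
noncomputable def johnsonVertexProjection : Matrix (JohnsonEdge N) (JohnsonEdge N) ℝ :=
  ((N : ℝ) - 2)⁻¹ •
    (johnsonIncidence N * (1 - averagingMatrix (Fin N)) * (johnsonIncidence N)ᵀ)

/-- The primitive idempotents `E₀, E₁, E₂` of the Johnson scheme `J(N,2)`, that is, the orthogonal
projections onto its common eigenspaces. -/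
noncomputable def johnsonProjection : Fin 3 → Matrix (JohnsonEdge N) (JohnsonEdge N) ℝ :=
  ![averagingMatrix _, johnsonVertexProjection N,
    1 - (averagingMatrix _ + johnsonVertexProjection N)]

theorem isStarProjection_johnsonVertexProjection :
    IsStarProjection (johnsonVertexProjection N) := by
  have hP := (isStarProjection_averagingMatrix (n := Fin N)).one_sub
  rw [johnsonVertexProjection, ← conjTranspose_eq_transpose_of_trivial]
  refine isStarProjection_inv_smul_mul_mul_conjTranspose hP (.all _) ?_
  rw [conjTranspose_eq_transpose_of_trivial, johnsonIncidence_transpose_mul_self, Matrix.mul_add,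
    Matrix.add_mul, Matrix.mul_assoc _ (vecMulVec 1 1), vecMulVec_mul,
    one_vecMul_one_sub_averagingMatrix, vecMulVec_zero, Matrix.mul_zero, add_zero, Matrix.mul_smul,
    Matrix.mul_one, Matrix.smul_mul, hP.isIdempotentElem.eq]

theorem averagingMatrix_mul_johnsonVertexProjection :
    averagingMatrix (JohnsonEdge N) * johnsonVertexProjection N = 0 := by
  rw [johnsonVertexProjection, Matrix.mul_smul, ← Matrix.mul_assoc,
    averagingMatrix_mul_mul_one_sub_averagingMatrix (one_vecMul_johnsonIncidence N),
    Matrix.zero_mul, smul_zero]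

theorem completeOrthogonalIdempotents_johnsonProjection :
    CompleteOrthogonalIdempotents (johnsonProjection N) := by
  have h₀ := isStarProjection_averagingMatrix (n := JohnsonEdge N)
  have h₁ := isStarProjection_johnsonVertexProjection N
  have h₀₁ := averagingMatrix_mul_johnsonVertexProjection N
  have hcomm := h₀.isSelfAdjoint.commute_of_mul_eq_zero h₁.isSelfAdjoint h₀₁
  exact completeOrthogonalIdempotents_triple h₀.isIdempotentElem h₁.isIdempotentElem h₀₁
    (hcomm.eq.symm.trans h₀₁)

theorem isStarProjection_johnsonProjection (i : Fin 3) :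
    IsStarProjection (johnsonProjection N i) where
  isIdempotentElem := (completeOrthogonalIdempotents_johnsonProjection N).idem i
  isSelfAdjoint := by
    have h₀ := (isStarProjection_averagingMatrix (n := JohnsonEdge N)).isSelfAdjoint
    have h₁ := (isStarProjection_johnsonVertexProjection N).isSelfAdjoint
    fin_cases i
    exacts [h₀, h₁, (IsSelfAdjoint.one _).sub (h₀.add h₁)]

theorem johnsonR_zero_eq :
    JohnsonR N 0 = johnsonProjection N 0 + johnsonProjection N 1 + johnsonProjection N 2 := by
  rw [johnsonR_zero, ← (completeOrthogonalIdempotents_johnsonProjection N).complete,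
    Fin.sum_univ_three]

theorem johnsonR_sum_eq_smul_johnsonProjection :
    JohnsonR N 0 + JohnsonR N 1 + JohnsonR N 2 =
      ((N : ℝ) * (N - 1) / 2) • johnsonProjection N 0 := by
  rw [johnsonR_zero_add_one_add_two, ← card_smul_averagingMatrix, card_johnsonEdge]
  rfl

variable {N}

theorem johnsonIncidence_mul_averagingMatrix_mul_transpose (hN : N ≠ 0) :
    johnsonIncidence N * averagingMatrix (Fin N) * (johnsonIncidence N)ᵀ =
      (2 * ((N : ℝ) - 1)) • johnsonProjection N 0 := by
  have hN' : (N : ℝ) ≠ 0 := mod_cast hN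
  calc
    _ = (4 / N : ℝ) • vecMulVec 1 1 := by
      rw [averagingMatrix, Matrix.mul_smul, Matrix.smul_mul, mul_vecMulVec, vecMulVec_mul,
        vecMul_transpose, johnsonIncidence_mulVec_one, smul_vecMulVec, vecMulVec_smul,
        Fintype.card_fin]
      match_scalars
      field
    _ = (2 * ((N : ℝ) - 1)) • johnsonProjection N 0 := by
      rw [← johnsonR_zero_add_one_add_two, johnsonR_sum_eq_smul_johnsonProjection]
      match_scalars
      field

theorem two_smul_johnsonR_zero_add_johnsonR_one_eq (hN : 3 ≤ N) :
    (2 : ℝ) • JohnsonR N 0 + JohnsonR N 1 =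
      (2 * ((N : ℝ) - 1)) • johnsonProjection N 0 + ((N : ℝ) - 2) • johnsonProjection N 1 := by
  have hN' : (N : ℝ) - 2 ≠ 0 := sub_ne_zero.2 (by norm_cast; lia)
  have hE₁ : ((N : ℝ) - 2) • johnsonProjection N 1 =
      johnsonIncidence N * (1 - averagingMatrix (Fin N)) * (johnsonIncidence N)ᵀ :=
    smul_inv_smul₀ hN' _
  rw [← johnsonIncidence_mul_transpose_self, hE₁,
    ← johnsonIncidence_mul_averagingMatrix_mul_transpose (by lia), ← Matrix.add_mul,
    ← Matrix.mul_add, add_sub_cancel, Matrix.mul_one]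

theorem johnsonR_one_eq (hN : 3 ≤ N) :
    JohnsonR N 1 = (2 * ((N : ℝ) - 2)) • johnsonProjection N 0 +
      ((N : ℝ) - 4) • johnsonProjection N 1 - (2 : ℝ) • johnsonProjection N 2 := by
  rw [eq_sub_of_add_eq' (two_smul_johnsonR_zero_add_johnsonR_one_eq hN), johnsonR_zero_eq]
  module

theorem johnsonR_two_eq (hN : 3 ≤ N) :
    JohnsonR N 2 = (((N : ℝ) - 2) * (N - 3) / 2) • johnsonProjection N 0 -
      ((N : ℝ) - 3) • johnsonProjection N 1 + johnsonProjection N 2 := by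
  rw [eq_sub_of_add_eq' (johnsonR_sum_eq_smul_johnsonProjection N), johnsonR_one_eq hN,
    johnsonR_zero_eq]
  module

theorem johnsonR_zero_add_smul_add_smul_eq (hN : 3 ≤ N) (α₁ α₂ : ℝ) :
    JohnsonR N 0 + α₁ • JohnsonR N 1 + α₂ • JohnsonR N 2 =
      ∑ i, ![1 + 2 * ((N : ℝ) - 2) * α₁ + ((N : ℝ) - 2) * ((N : ℝ) - 3) / 2 * α₂,
        1 + ((N : ℝ) - 4) * α₁ - ((N : ℝ) - 3) * α₂, 1 - 2 * α₁ + α₂] i •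
          johnsonProjection N i := by
  rw [johnsonR_zero_eq, johnsonR_one_eq hN, johnsonR_two_eq hN, Fin.sum_univ_three]
  simp only [cons_val]
  module

theorem exists_smul_johnsonR_eq_sum_smul_johnsonProjection (hN : 3 ≤ N) (c : Fin 3 → ℝ) :
    ∃ β₀ β₁ β₂ : ℝ, β₀ • JohnsonR N 0 + β₁ • JohnsonR N 1 + β₂ • JohnsonR N 2 =
      ∑ i, c i • johnsonProjection N i := by
  have hN₀ : (N : ℝ) ≠ 0 := by norm_cast; lia
  have hN₁ : (N : ℝ) - 1 ≠ 0 := sub_ne_zero.2 (by norm_cast; lia)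
  have hN₂ : (N : ℝ) - 2 ≠ 0 := sub_ne_zero.2 (by norm_cast; lia)
  -- `γ` fixes the eigenvalue on `E₁` and `δ` then corrects the one on `E₀`.
  obtain ⟨γ, hγ⟩ : ∃ γ : ℝ, γ * (N - 2) = c 1 - c 2 := ⟨_, div_mul_cancel₀ _ hN₂⟩
  obtain ⟨δ, hδ⟩ : ∃ δ : ℝ, δ * (N * (N - 1) / 2) = c 0 - c 2 - γ * (2 * (N - 1)) :=
    ⟨_, div_mul_cancel₀ _ (div_ne_zero (mul_ne_zero hN₀ hN₁) two_ne_zero)⟩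
  refine ⟨c 2 + 2 * γ + δ, γ + δ, δ, ?_⟩
  calc
    _ = c 2 • JohnsonR N 0 + γ • ((2 : ℝ) • JohnsonR N 0 + JohnsonR N 1) +
        δ • (JohnsonR N 0 + JohnsonR N 1 + JohnsonR N 2) := by module
    _ = ∑ i, c i • johnsonProjection N i := by
      rw [two_smul_johnsonR_zero_add_johnsonR_one_eq hN, johnsonR_sum_eq_smul_johnsonProjection,
        johnsonR_zero_eq, Fin.sum_univ_three]
      match_scalars <;> linarith

end SpectralDecomposition

/-- if `λ₀, λ₁, λ₂ ≥ 0` then the positive semidefinite square root of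
`Σ = R0 + α₁ • R1 + α₂ • R2` lies in the span of `R0, R1, R2`. -/
theorem johnson_psd_sqrt_in_algebra (N : ℕ) (hN : 4 ≤ N) (α₁ α₂ : ℝ)
    (h0 : 0 ≤ 1 + 2 * ((N : ℝ) - 2) * α₁ + ((N : ℝ) - 2) * ((N : ℝ) - 3) / 2 * α₂)
    (h1 : 0 ≤ 1 + ((N : ℝ) - 4) * α₁ - ((N : ℝ) - 3) * α₂)
    (h2 : 0 ≤ 1 - 2 * α₁ + α₂) :
    ∃ β₀ β₁ β₂ : ℝ,
      (β₀ • JohnsonR N 0 + β₁ • JohnsonR N 1 + β₂ • JohnsonR N 2).PosSemidef ∧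
      (β₀ • JohnsonR N 0 + β₁ • JohnsonR N 1 + β₂ • JohnsonR N 2) ^ 2 =
        JohnsonR N 0 + α₁ • JohnsonR N 1 + α₂ • JohnsonR N 2 := by
  set eig : Fin 3 → ℝ := ![1 + 2 * ((N : ℝ) - 2) * α₁ + ((N : ℝ) - 2) * ((N : ℝ) - 3) / 2 * α₂,
    1 + ((N : ℝ) - 4) * α₁ - ((N : ℝ) - 3) * α₂, 1 - 2 * α₁ + α₂]
  have eig_nonneg : ∀ i, 0 ≤ eig i := by simp [eig, Fin.forall_fin_succ, h0, h1, h2]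
  have hN₃ : 3 ≤ N := by lia
  obtain ⟨β₀, β₁, β₂, hβ⟩ :=
    exists_smul_johnsonR_eq_sum_smul_johnsonProjection hN₃ fun i ↦ √(eig i)
  refine ⟨β₀, β₁, β₂, ?_, ?_⟩ <;> rw [hβ]
  · exact posSemidef_sum_smul_of_isStarProjection (isStarProjection_johnsonProjection N)
      fun i ↦ Real.sqrt_nonneg _
  · rw [johnsonR_zero_add_smul_add_smul_eq hN₃, sq, sum_smul_mul_sum_smul_of_orthogonalIdempotents
      (completeOrthogonalIdempotents_johnsonProjection N).toOrthogonalIdempotents]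
    simp only [Real.mul_self_sqrt (eig_nonneg _), eig]
end

section
/- In the Nykamp–Zhao configuration on the complete directed graph with N ≥ 4 vertices, the relation matrices satisfy the matrix identity Rconv * Rdisj = (N−3) • Ranti + (N−3) • Rdiv + (N−4) • Rdisj. -/
/-- Edges of the complete directed graph on `N` vertices. -/
abbrev DEdge (N : ℕ) := {p : Fin N × Fin N // p.1 ≠ p.2}

/-- Identity relation: `x = y`. -/
def Rid (N : ℕ) : Matrix (DEdge N) (DEdge N) ℝ :=
  fun x y => if x = y then 1 else 0

/-- Reciprocal relation: `y₁ = x₂` and `y₂ = x₁`. -/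
def Rrecip (N : ℕ) : Matrix (DEdge N) (DEdge N) ℝ :=
  fun x y => if y.1.1 = x.1.2 ∧ y.1.2 = x.1.1 then 1 else 0

/-- Convergent relation: `x₂ = y₂` and `x₁ ≠ y₁`. -/
def Rconv (N : ℕ) : Matrix (DEdge N) (DEdge N) ℝ :=
  fun x y => if x.1.2 = y.1.2 ∧ x.1.1 ≠ y.1.1 then 1 else 0

/-- Divergent relation: `x₁ = y₁` and `x₂ ≠ y₂`. -/
def Rdiv (N : ℕ) : Matrix (DEdge N) (DEdge N) ℝ :=
  fun x y => if x.1.1 = y.1.1 ∧ x.1.2 ≠ y.1.2 then 1 else 0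

/-- Chain relation: `x₂ = y₁` and `x₁ ≠ y₂`. -/
def Rchain (N : ℕ) : Matrix (DEdge N) (DEdge N) ℝ :=
  fun x y => if x.1.2 = y.1.1 ∧ x.1.1 ≠ y.1.2 then 1 else 0

/-- Anti-chain relation: `x₁ = y₂` and `x₂ ≠ y₁`. -/
def Ranti (N : ℕ) : Matrix (DEdge N) (DEdge N) ℝ :=
  fun x y => if x.1.1 = y.1.2 ∧ x.1.2 ≠ y.1.1 then 1 else 0

/-- Disjoint relation: `{x₁, x₂} ∩ {y₁, y₂} = ∅`. -/
def Rdisj (N : ℕ) : Matrix (DEdge N) (DEdge N) ℝ :=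
  fun x y =>
    if ({x.1.1, x.1.2} : Finset (Fin N)) ∩ {y.1.1, y.1.2} = ∅ then 1 else 0

/-!
An edge convergent with `x` has the form `(k, x₂)` with `k ∉ {x₁, x₂}`, and it is disjoint from `y`
precisely when neither `k` nor `x₂` is an endpoint of `y`. So the `(x, y)` entry of the product
vanishes if `x₂ ∈ {y₁, y₂}`, and otherwise counts the vertices outside `{x₁, x₂} ∪ {y₁, y₂}`. That
union has three elements if `x₁ ∈ {y₁, y₂}`, which is the case when `x` is anti-chained to or
divergent from `y`, and four if `x` and `y` are disjoint.
-/

open Finset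

namespace DEdge

variable {N : ℕ}

/-- The set of endpoints of an edge, forgetting its direction. -/
def ends (x : DEdge N) : Finset (Fin N) := {x.1.1, x.1.2}

theorem mem_ends {x : DEdge N} {k : Fin N} : k ∈ x.ends ↔ k = x.1.1 ∨ k = x.1.2 := by
  simp [ends]

theorem disjoint_ends {x : DEdge N} {s : Finset (Fin N)} :
    Disjoint x.ends s ↔ x.1.1 ∉ s ∧ x.1.2 ∉ s := by
  simp [ends]

theorem card_ends (x : DEdge N) : #x.ends = 2 := card_pair x.2

theorem card_ends_union {x : DEdge N} {s : Finset (Fin N)} (hx : x.1.2 ∉ s) :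
    #(x.ends ∪ s) = #s + if x.1.1 ∈ s then 1 else 2 := by
  have h_union : x.ends ∪ s = insert x.1.1 (insert x.1.2 s) := by
    simp [ends, insert_union]
  have h_tail : x.1.1 ∈ insert x.1.2 s ↔ x.1.1 ∈ s := by simp [x.2]
  rw [h_union, card_insert_eq_ite, card_insert_of_notMem hx]
  simp only [h_tail]
  split_ifs <;> rfl

theorem cast_card_compl_ends_union {R : Type*} [AddCommGroupWithOne R] {x : DEdge N}
    {s : Finset (Fin N)} (hx : x.1.2 ∉ s) :
    (#(x.ends ∪ s)ᶜ : R) = N - #s - if x.1.1 ∈ s then 1 else 2 := by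
  rw [card_compl, Nat.cast_sub (card_le_univ _), card_ends_union hx, Fintype.card_fin,
    Nat.cast_add, ← sub_sub]
  push_cast
  rfl

/-- The edge `(k, x₂)` obtained from `x` by moving its tail to a vertex `k` off `x`. -/
def replaceTail (x : DEdge N) (k : {k : Fin N // k ∉ x.ends}) : DEdge N :=
  ⟨(k, x.1.2), fun h => k.2 (mem_ends.2 (.inr h))⟩

end DEdge

section RelationMatrices

open DEdge

variable {N : ℕ}

theorem Rconv_mul_apply {ι : Type*} (A : Matrix (DEdge N) ι ℝ) (x : DEdge N) (j : ι) :
    (Rconv N * A) x j = ∑ k, A (x.replaceTail k) j := by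
  simp only [Matrix.mul_apply, Rconv, ite_mul, one_mul, zero_mul]
  rw [← sum_filter]
  symm
  refine sum_bij (fun k _ => x.replaceTail k) ?_ ?_ ?_ fun _ _ => rfl
  · rintro ⟨k, hk⟩ -
    simp only [mem_ends, not_or] at hk
    simp [replaceTail, Ne.symm hk.1]
  · intro k _ l _ h
    exact Subtype.ext (congrArg (fun z : DEdge N => z.1.1) h)
  · rintro ⟨⟨k, l⟩, hkl⟩ hz
    obtain ⟨rfl, hk⟩ : x.1.2 = l ∧ x.1.1 ≠ k := by simpa using hz
    exact ⟨⟨k, by simpa [mem_ends] using ⟨hk.symm, hkl⟩⟩, mem_univ _, rfl⟩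

theorem Rdisj_apply (x y : DEdge N) :
    Rdisj N x y = if x.1.1 ∉ y.ends ∧ x.1.2 ∉ y.ends then 1 else 0 := by
  simp only [← disjoint_ends, disjoint_iff_inter_eq_empty]
  rfl

theorem Ranti_add_Rdiv_apply (x y : DEdge N) :
    Ranti N x y + Rdiv N x y = if x.1.1 ∈ y.ends ∧ x.1.2 ∉ y.ends then 1 else 0 := by
  -- As `y` is not a loop, `x₁` equals at most one of its endpoints; as `x` is not a loop, `x₂`
  -- differs from that one anyway.
  simp only [Ranti, Rdiv, mem_ends]
  grind

theorem Rconv_mul_Rdisj_apply (x y : DEdge N) :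
    (Rconv N * Rdisj N) x y = if x.1.2 ∈ y.ends then 0 else (#(x.ends ∪ y.ends)ᶜ : ℝ) := by
  calc (Rconv N * Rdisj N) x y
      = ∑ k : {k // k ∉ x.ends}, if (k : Fin N) ∉ y.ends ∧ x.1.2 ∉ y.ends then 1 else 0 := by
        simp only [Rconv_mul_apply, Rdisj_apply, replaceTail]
    _ = ∑ k ∈ x.endsᶜ, if k ∉ y.ends ∧ x.1.2 ∉ y.ends then 1 else 0 :=
        (sum_subtype _ (fun _ => mem_compl)
          fun k => if k ∉ y.ends ∧ x.1.2 ∉ y.ends then (1 : ℝ) else 0).symm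
    _ = if x.1.2 ∈ y.ends then 0 else (#(x.ends ∪ y.ends)ᶜ : ℝ) := by
        by_cases hx : x.1.2 ∈ y.ends
        · simp [hx]
        · simp only [hx, not_false_eq_true, and_true, if_false]
          rw [sum_boole, compl_union, ← filter_mem_eq_inter]
          simp only [mem_compl]

end RelationMatrices

/-- `Rconv * Rdisj = (N−3) • Ranti + (N−3) • Rdiv + (N−4) • Rdisj`. -/
theorem nykampZhao_conv_mul_disj (N : ℕ) (hN : 4 ≤ N) :
    Rconv N * Rdisj N =
      ((N : ℝ) - 3) • Ranti N + ((N : ℝ) - 3) • Rdiv N + ((N : ℝ) - 4) • Rdisj N := by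
  ext x y
  have h_rhs : (((N : ℝ) - 3) • Ranti N + ((N : ℝ) - 3) • Rdiv N + ((N : ℝ) - 4) • Rdisj N) x y =
      ((N : ℝ) - 3) * (Ranti N x y + Rdiv N x y) + ((N : ℝ) - 4) * Rdisj N x y := by
    simp [mul_add]
  rw [h_rhs, Rconv_mul_Rdisj_apply, Ranti_add_Rdiv_apply, Rdisj_apply]
  by_cases hx₂ : x.1.2 ∈ y.ends
  · simp [hx₂]
  · rw [if_neg hx₂, DEdge.cast_card_compl_ends_union hx₂, DEdge.card_ends]
    by_cases hx₁ : x.1.1 ∈ y.ends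
    · simp only [hx₁, hx₂, not_true_eq_false, not_false_eq_true, and_true, if_true, if_false]
      ring
    · simp only [hx₁, hx₂, not_false_eq_true, and_true, if_true, if_false]
      ring
end

section
/- In the Nykamp–Zhao configuration on the complete directed graph with N ≥ 4 vertices, the relation matrices satisfy the matrix identity Rchain * Ranti = (N−2) • Rid + (N−3) • Rconv. -/
/-!
The anti-chain relation is the converse of the chain relation, so `Rchain * Ranti` is the Gram
matrix of the rows of `Rchain`: its `(x, y)` entry counts the edges `z` that continue both `x` and
`y`. There are none unless `x` and `y` share their end vertex `b`. If they do, such a `z` is an edge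
`(b, f)` whose end `f` avoids `b` and the starts of `x` and `y`, which are two forbidden vertices
for `x = y` and three otherwise.
-/

open Finset Matrix

/-- The 0/1 matrix of a relation, with entries in `R`. -/
def relMatrix {X : Type*} (R : Type*) [Zero R] [One R] (r : X → X → Prop) [DecidableRel r] :
    Matrix X X R :=
  Matrix.of fun x y => if r x y then 1 else 0

theorem relMatrix_mul_transpose_apply {X R : Type*} [Fintype X] [NonAssocSemiring R]
    (r : X → X → Prop) [DecidableRel r] (x y : X) :
    (relMatrix R r * (relMatrix R r)ᵀ) x y = #{z | r x z ∧ r y z} := by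
  have entry_mul_entry (z : X) : relMatrix R r x z * (relMatrix R r)ᵀ z y =
      if r x z ∧ r y z then 1 else 0 := by
    simp [relMatrix, ← ite_and, and_comm]
  simp only [mul_apply, entry_mul_entry, sum_boole]

/-- Edges `(start, end)` of the complete directed graph on the vertex type `V`, so that `DEdge N` is
`DirectedEdge (Fin N)`. -/
abbrev DirectedEdge (V : Type*) := {p : V × V // p.1 ≠ p.2}

namespace DirectedEdge

variable {V : Type*}

/-- The chain relation: `y` starts where `x` ends, without returning to the start of `x`. -/
def Chain (x y : DirectedEdge V) : Prop := x.1.2 = y.1.1 ∧ x.1.1 ≠ y.1.2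

/-- The convergent relation: distinct edges with the same end vertex. -/
def Conv (x y : DirectedEdge V) : Prop := x.1.2 = y.1.2 ∧ x.1.1 ≠ y.1.1

theorem Chain.end_eq_end {x y z : DirectedEdge V} (hx : Chain x z) (hy : Chain y z) :
    x.1.2 = y.1.2 :=
  hx.1.trans hy.1.symm

theorem eq_or_conv_of_end_eq {x y : DirectedEdge V} (h : x.1.2 = y.1.2) : x = y ∨ Conv x y :=
  or_iff_not_imp_left.2 fun hxy => ⟨h, fun h' => hxy (Subtype.ext (Prod.ext h' h))⟩

theorem Conv.ne {x y : DirectedEdge V} (h : Conv x y) : x ≠ y := fun hxy => h.2 (by rw [hxy])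

variable [DecidableEq V]

instance : DecidableRel (Chain (V := V)) := fun x y =>
  inferInstanceAs (Decidable (x.1.2 = y.1.1 ∧ x.1.1 ≠ y.1.2))

instance : DecidableRel (Conv (V := V)) := fun x y =>
  inferInstanceAs (Decidable (x.1.2 = y.1.2 ∧ x.1.1 ≠ y.1.1))

theorem chain_and_chain_iff {x y : DirectedEdge V} (h : x.1.2 = y.1.2) (z : DirectedEdge V) :
    Chain x z ∧ Chain y z ↔
      x.1.2 = z.1.1 ∧ z.1.2 ∉ ({x.1.1, y.1.1, x.1.2} : Finset V) := by
  have end_ne_start : z.1.2 ≠ z.1.1 := z.2.symm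
  simp only [Chain, mem_insert, mem_singleton]
  grind

variable [Fintype V]

theorem card_chain_and_chain {x y : DirectedEdge V} (h : x.1.2 = y.1.2) :
    #{z | Chain x z ∧ Chain y z} = #({x.1.1, y.1.1, x.1.2}ᶜ : Finset V) := by
  simp only [chain_and_chain_iff h, ← mem_compl]
  refine card_bij (fun z _ => z.1.2) (fun z hz => ?_) (fun z hz w hw hzw => ?_) fun f hf => ?_
  · exact (mem_filter_univ z).1 hz |>.2
  · rw [mem_filter_univ] at hz hw
    exact Subtype.ext (Prod.ext (hz.1.symm.trans hw.1) hzw)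
  · have end_ne : x.1.2 ≠ f := by rintro rfl; simp at hf
    exact ⟨⟨(x.1.2, f), end_ne⟩, (mem_filter_univ _).2 ⟨rfl, hf⟩, rfl⟩

theorem card_chain_add_two (x : DirectedEdge V) :
    #{z | Chain x z} + 2 = Fintype.card V := by
  have h := card_chain_and_chain (x := x) rfl
  simp only [and_self, insert_idem] at h
  rw [h, ← card_pair x.2, card_compl_add_card]

theorem Conv.card_chain_and_chain_add_three {x y : DirectedEdge V} (h : Conv x y) :
    #{z | Chain x z ∧ Chain y z} + 3 = Fintype.card V := by
  have card_forbidden : #{x.1.1, y.1.1, x.1.2} = 3 :=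
    card_eq_three.2 ⟨_, _, _, h.2, x.2, h.1 ▸ y.2, rfl⟩
  rw [card_chain_and_chain h.1, ← card_forbidden, card_compl_add_card]

end DirectedEdge

open DirectedEdge

theorem nykampZhao_chain_mul_anti_general (V R : Type*) [Fintype V] [DecidableEq V]
    [NonAssocRing R] :
    relMatrix R (Chain (V := V)) * (relMatrix R Chain)ᵀ =
      ((Fintype.card V : R) - 2) • (1 : Matrix (DirectedEdge V) (DirectedEdge V) R) +
        ((Fintype.card V : R) - 3) • relMatrix R Conv := by
  ext x y
  rw [relMatrix_mul_transpose_apply]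
  by_cases hend : x.1.2 = y.1.2
  · obtain rfl | hconv := eq_or_conv_of_end_eq hend
    · simp [relMatrix, Conv, ← card_chain_add_two x]
    · simp [relMatrix, hconv, hconv.ne, ← hconv.card_chain_and_chain_add_three]
  · have no_common : ∀ z, ¬(Chain x z ∧ Chain y z) := fun z hz => hend (hz.1.end_eq_end hz.2)
    have hne : x ≠ y := fun hxy => hend (by rw [hxy])
    simp [relMatrix, Conv, no_common, hend, hne]

theorem rid_eq_one (N : ℕ) : Rid N = 1 := rfl

theorem rchain_eq_relMatrix (N : ℕ) : Rchain N = relMatrix ℝ Chain := rfl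

theorem rconv_eq_relMatrix (N : ℕ) : Rconv N = relMatrix ℝ Conv := rfl

theorem ranti_eq_transpose_rchain (N : ℕ) : Ranti N = (Rchain N)ᵀ := by
  ext x y
  simp only [Ranti, Rchain, transpose_apply, eq_comm, ne_comm]

/-- `Rchain * Ranti = (N−2) • Rid + (N−3) • Rconv`. -/
theorem nykampZhao_chain_mul_anti (N : ℕ) (hN : 4 ≤ N) :
    Rchain N * Ranti N = ((N : ℝ) - 2) • Rid N + ((N : ℝ) - 3) • Rconv N := by
  rw [ranti_eq_transpose_rchain, rchain_eq_relMatrix, rconv_eq_relMatrix, rid_eq_one]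
  simpa only [Fintype.card_fin] using nykampZhao_chain_mul_anti_general (Fin N) ℝ
end

section
/- In the Nykamp–Zhao configuration on the complete directed graph with N ≥ 5 vertices, fix real numbers αrecip, αconv, αchain, αdiv, αdisj and let Σ = Rid + αrecip • Rrecip + αconv • Rconv + αchain • (Rchain + Ranti) + αdiv • Rdiv + αdisj • Rdisj. Set τ = √(N(N−2)(αconv − αdiv)² + (αconv + αdiv − 2(N−3)(αchain − αdisj) − 2αrecip)²). Then every (real) eigenvalue of the symmetric matrix Σ lies in the five-element set {λ₁, λ₂, λ₃, λ₄, λ₅}, where λ₁ = 1 + αrecip + (N−2)αconv + 2(N−2)αchain + (N−2)αdiv + (N−2)(N−3)αdisj; λ₂ = 1 − αrecip − αconv + 2αchain − αdiv; λ₃ = 1 + αrecip − αconv − 2αchain − αdiv + 2αdisj; and λ₄, λ₅ = 1 + ((N−3)/2)αconv − αchain + ((N−3)/2)αdiv − (N−3)αdisj ± τ/2. -/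
/-!
`Σ` acts on an edge function `v` through `v` itself, its reversal `v ∘ reverse`, the out- and
in-sums of `v` at the two end points, and the total of `v`. Hence the total, the pair (out-sum,
in-sum) at a vertex, and the pair `(v, v ∘ reverse)` form a triangular system, and an eigenvalue of
`Σ` is read off from the first of these that does not vanish on its eigenvector. A nonzero total
gives `λ₁`. If the total vanishes, a nonzero pair of marginals at a vertex is an eigenvector of a
fixed `2 × 2` matrix, whose eigenvalues are `λ₄` and `λ₅`. If all marginals vanish, `Σ` acts on `v`
as a combination of the identity and the reversal, with eigenvalues `λ₂` and `λ₃`.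
-/

open scoped Matrix

section Eigenvalues

theorem mem_spectrum_iff_exists_mulVec_eq_smul {n K : Type*} [Fintype n] [DecidableEq n] [Field K]
    {A : Matrix n n K} {μ : K} : μ ∈ spectrum K A ↔ ∃ v ≠ 0, A *ᵥ v = μ • v := by
  rw [spectrum.mem_iff, Matrix.isUnit_iff_isUnit_det, isUnit_iff_ne_zero, not_not,
    ← Matrix.exists_mulVec_eq_zero_iff]
  simp only [Matrix.sub_mulVec, Algebra.algebraMap_eq_smul_one, Matrix.smul_mulVec,
    Matrix.one_mulVec, sub_eq_zero, eq_comm]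

theorem eq_or_eq_of_mem_spectrum_fin_two {A : Matrix (Fin 2) (Fin 2) ℝ} {μ : ℝ}
    (hμ : μ ∈ spectrum ℝ A) :
    μ = A.trace / 2 + √A.discr / 2 ∨ μ = A.trace / 2 - √A.discr / 2 := by
  have hroot : μ ^ 2 - A.trace * μ + A.det = 0 := by
    simpa [Matrix.mem_spectrum_iff_isRoot_charpoly, Matrix.charpoly_fin_two] using hμ
  have hdiscr : A.discr = (2 * μ - A.trace) ^ 2 := by
    rw [Matrix.discr_fin_two]
    linear_combination -4 * hroot
  rw [hdiscr, Real.sqrt_sq_eq_abs]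
  rcases abs_choice (2 * μ - A.trace) with h | h
  · exact .inl (by linarith)
  · exact .inr (by linarith)

theorem eq_add_or_eq_sub_of_involutive {ι R : Type*} [CommRing R] [NoZeroDivisors R]
    {σ : ι → ι} (hσ : σ.Involutive) {v : ι → R} (hv : v ≠ 0) {μ p q : R}
    (h : ∀ i, μ * v i = p * v i + q * v (σ i)) : μ = p + q ∨ μ = p - q := by
  obtain ⟨i, hi⟩ := Function.ne_iff.mp hv
  have hσi := h (σ i)
  rw [hσ i] at hσi
  have hsq : (μ - p) ^ 2 = q ^ 2 :=
    mul_right_cancel₀ hi (by linear_combination (μ - p) * h i + q * hσi)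
  rcases sq_eq_sq_iff_eq_or_eq_neg.mp hsq with h | h
  · exact .inl (by linear_combination h)
  · exact .inr (by linear_combination h)

end Eigenvalues

namespace DEdge

variable {N : ℕ}

/-- The reversal `(i, j) ↦ (j, i)` of edges. -/
def reverse : Equiv.Perm (DEdge N) where
  toFun x := ⟨x.1.swap, x.2.symm⟩
  invFun x := ⟨x.1.swap, x.2.symm⟩
  left_inv _ := rfl
  right_inv _ := rfl

section Marginals

variable {M : Type*} [AddCommMonoid M]

/-- The out-marginal of an edge function: its sum over the edges leaving `a`. -/
def outSum (v : DEdge N → M) (a : Fin N) : M := ∑ x with x.1.1 = a, v x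

/-- The in-marginal of an edge function: its sum over the edges entering `a`. -/
def inSum (v : DEdge N → M) (a : Fin N) : M := ∑ x with x.1.2 = a, v x

theorem sum_comp_reverse (v : DEdge N → M) : ∑ x, (v ∘ reverse) x = ∑ x, v x :=
  Equiv.sum_comp reverse v

theorem outSum_comp_reverse (v : DEdge N → M) : outSum (v ∘ reverse) = inSum v := by
  ext a
  simp only [outSum, inSum, Finset.sum_filter]
  exact Equiv.sum_comp reverse fun x ↦ if x.1.2 = a then v x else 0

theorem inSum_comp_reverse (v : DEdge N → M) : inSum (v ∘ reverse) = outSum v :=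
  (outSum_comp_reverse (v ∘ reverse)).symm

theorem outSum_add (v w : DEdge N → M) : outSum (v + w) = outSum v + outSum w :=
  funext fun _ ↦ Finset.sum_add_distrib

theorem outSum_smul {R : Type*} [DistribSMul R M] (c : R) (v : DEdge N → M) :
    outSum (c • v) = c • outSum v :=
  funext fun _ ↦ Finset.smul_sum.symm

theorem inSum_smul {R : Type*} [DistribSMul R M] (c : R) (v : DEdge N → M) :
    inSum (c • v) = c • inSum v :=
  funext fun _ ↦ Finset.smul_sum.symm

theorem sum_outSum (v : DEdge N → M) : ∑ a, outSum v a = ∑ x, v x :=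
  Finset.sum_fiberwise _ _ _

theorem sum_inSum (v : DEdge N → M) : ∑ a, inSum v a = ∑ x, v x :=
  Finset.sum_fiberwise _ _ _

end Marginals

section SumsOfVertexFunctions

variable {M : Type*} [AddCommGroup M] (g : Fin N → M) (a : Fin N)

theorem outSum_target : outSum (fun x ↦ g x.1.2) a = ∑ b, g b - g a := by
  rw [← Finset.sum_erase_eq_sub (Finset.mem_univ a)]
  refine Finset.sum_bij' (fun x _ ↦ x.1.2)
    (fun b hb ↦ ⟨(a, b), (Finset.ne_of_mem_erase hb).symm⟩) ?_ ?_ ?_ ?_ ?_ <;>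
  simp +contextual [eq_comm]

theorem outSum_const (m : M) : outSum (fun _ ↦ m) a = N • m - m := by
  simpa using outSum_target (fun _ ↦ m) a

theorem outSum_source : outSum (fun x ↦ g x.1.1) a = N • g a - g a := by
  rw [← outSum_const]
  exact Finset.sum_congr rfl fun x hx ↦ congrArg g (Finset.mem_filter.mp hx).2

end SumsOfVertexFunctions

section RelationMatrices

variable (v : DEdge N → ℝ) (x : DEdge N)

theorem Rid_mulVec : Rid N *ᵥ v = v := by
  have hone : Rid N = 1 := by ext x y; simp [Rid, Matrix.one_apply]
  rw [hone, Matrix.one_mulVec]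

theorem Rrecip_mulVec : Rrecip N *ᵥ v = v ∘ reverse := by
  ext x
  have hrev (y : DEdge N) : (y.1.1 = x.1.2 ∧ y.1.2 = x.1.1) ↔ y = reverse x := by
    simp [reverse, Subtype.ext_iff, Prod.ext_iff]
  simp [Matrix.mulVec, dotProduct, Rrecip, hrev]

theorem Rconv_mulVec_apply : (Rconv N *ᵥ v) x = inSum v x.1.2 - v x := by
  have hentry (y : DEdge N) : Rconv N x y =
      (if y.1.2 = x.1.2 then 1 else 0) - if y = x then 1 else 0 := by
    grind [Rconv]
  simp [Matrix.mulVec, dotProduct, hentry, sub_mul, inSum, Finset.sum_filter]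

theorem Rdiv_mulVec_apply : (Rdiv N *ᵥ v) x = outSum v x.1.1 - v x := by
  have hentry (y : DEdge N) : Rdiv N x y =
      (if y.1.1 = x.1.1 then 1 else 0) - if y = x then 1 else 0 := by
    grind [Rdiv]
  simp [Matrix.mulVec, dotProduct, hentry, sub_mul, outSum, Finset.sum_filter]

theorem Rchain_mulVec_apply : (Rchain N *ᵥ v) x = outSum v x.1.2 - v (reverse x) := by
  have hentry (y : DEdge N) : Rchain N x y =
      (if y.1.1 = x.1.2 then 1 else 0) - if y = reverse x then 1 else 0 := by
    grind [Rchain, reverse]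
  simp [Matrix.mulVec, dotProduct, hentry, sub_mul, outSum, Finset.sum_filter]

theorem Ranti_mulVec_apply : (Ranti N *ᵥ v) x = inSum v x.1.1 - v (reverse x) := by
  have hentry (y : DEdge N) : Ranti N x y =
      (if y.1.2 = x.1.1 then 1 else 0) - if y = reverse x then 1 else 0 := by
    grind [Ranti, reverse]
  simp [Matrix.mulVec, dotProduct, hentry, sub_mul, inSum, Finset.sum_filter]

variable (N) in
theorem sum_relations_eq_allOnes :
    Rid N + Rrecip N + Rconv N + Rdiv N + (Rchain N + Ranti N) + Rdisj N =
      Matrix.of fun _ _ ↦ 1 := by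
  ext x y
  have hdisj : ({x.1.1, x.1.2} : Finset (Fin N)) ∩ {y.1.1, y.1.2} = ∅ ↔
      x.1.1 ≠ y.1.1 ∧ x.1.1 ≠ y.1.2 ∧ x.1.2 ≠ y.1.1 ∧ x.1.2 ≠ y.1.2 := by
    grind
  simp only [Matrix.add_apply, Matrix.of_apply, Rid, Rrecip, Rconv, Rdiv, Rchain, Ranti, Rdisj,
    hdisj]
  grind

theorem Rdisj_mulVec_apply : (Rdisj N *ᵥ v) x =
    ∑ y, v y - outSum v x.1.1 - inSum v x.1.1 - outSum v x.1.2 - inSum v x.1.2 +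
      v x + v (reverse x) := by
  have h := congrFun (congrArg (· *ᵥ v) (sum_relations_eq_allOnes N)) x
  have hones : ((Matrix.of fun _ _ ↦ 1 : Matrix (DEdge N) (DEdge N) ℝ) *ᵥ v) x = ∑ y, v y := by
    simp [Matrix.mulVec, dotProduct]
  simp only [hones, Matrix.add_mulVec, Pi.add_apply, Rid_mulVec, Rrecip_mulVec, Rconv_mulVec_apply,
    Rdiv_mulVec_apply, Rchain_mulVec_apply, Ranti_mulVec_apply, Function.comp_apply] at h
  linear_combination h

end RelationMatrices

end DEdge

open DEdge

/-- The Nykamp–Zhao covariance matrix `Σ`. -/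
def edgeCovariance (N : ℕ) (αrecip αconv αchain αdiv αdisj : ℝ) :
    Matrix (DEdge N) (DEdge N) ℝ :=
  Rid N + αrecip • Rrecip N + αconv • Rconv N + αchain • (Rchain N + Ranti N) +
    αdiv • Rdiv N + αdisj • Rdisj N

/-- The action of `edgeCovariance` on the (out-sum, in-sum) pair at a vertex, for edge functions
with total zero. -/
def marginalMatrix (N : ℕ) (αrecip αconv αchain αdiv αdisj : ℝ) : Matrix (Fin 2) (Fin 2) ℝ :=
  !![1 - αconv + (N - 2) * αdiv - αchain - (N - 3) * αdisj,
      αrecip - αconv + (N - 3) * (αchain - αdisj);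
    αrecip - αdiv + (N - 3) * (αchain - αdisj),
      1 - αdiv + (N - 2) * αconv - αchain - (N - 3) * αdisj]

section Covariance

variable {N : ℕ} (αrecip αconv αchain αdiv αdisj : ℝ) (v : DEdge N → ℝ)

theorem edgeCovariance_mulVec :
    edgeCovariance N αrecip αconv αchain αdiv αdisj *ᵥ v =
      (1 - αconv - αdiv + αdisj) • v + (αrecip - 2 * αchain + αdisj) • (v ∘ reverse) +
      (αdiv - αdisj) • (fun x ↦ outSum v x.1.1) + (αchain - αdisj) • (fun x ↦ inSum v x.1.1) +
      (αchain - αdisj) • (fun x ↦ outSum v x.1.2) + (αconv - αdisj) • (fun x ↦ inSum v x.1.2) +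
      αdisj • (fun _ ↦ ∑ x, v x) := by
  ext x
  simp only [edgeCovariance, Matrix.add_mulVec, Matrix.smul_mulVec, Pi.add_apply, Pi.smul_apply,
    smul_eq_mul, Rid_mulVec, Rrecip_mulVec, Rconv_mulVec_apply, Rdiv_mulVec_apply,
    Rchain_mulVec_apply, Ranti_mulVec_apply, Rdisj_mulVec_apply, Function.comp_apply]
  ring

theorem edgeCovariance_mulVec_comp_reverse :
    (edgeCovariance N αrecip αconv αchain αdiv αdisj *ᵥ v) ∘ reverse =
      edgeCovariance N αrecip αdiv αchain αconv αdisj *ᵥ (v ∘ reverse) := by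
  rw [edgeCovariance_mulVec, edgeCovariance_mulVec, outSum_comp_reverse, inSum_comp_reverse,
    sum_comp_reverse]
  ext x
  simp only [reverse, Equiv.coe_fn_mk, Function.comp_apply, Pi.add_apply, Pi.smul_apply,
    smul_eq_mul, Prod.fst_swap, Prod.snd_swap, Prod.swap_swap]
  ring

theorem outSum_edgeCovariance_mulVec (a : Fin N) :
    outSum (edgeCovariance N αrecip αconv αchain αdiv αdisj *ᵥ v) a =
      (1 - αconv + (N - 2) * αdiv - αchain - (N - 3) * αdisj) * outSum v a +
      (αrecip - αconv + (N - 3) * (αchain - αdisj)) * inSum v a +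
      (αconv + αchain + (N - 3) * αdisj) * ∑ x, v x := by
  simp only [edgeCovariance_mulVec, outSum_add, outSum_smul, Pi.add_apply, Pi.smul_apply,
    outSum_comp_reverse, outSum_source, outSum_target, outSum_const, sum_outSum, sum_inSum,
    smul_eq_mul, nsmul_eq_mul]
  ring

theorem inSum_edgeCovariance_mulVec (a : Fin N) :
    inSum (edgeCovariance N αrecip αconv αchain αdiv αdisj *ᵥ v) a =
      (αrecip - αdiv + (N - 3) * (αchain - αdisj)) * outSum v a +
      (1 - αdiv + (N - 2) * αconv - αchain - (N - 3) * αdisj) * inSum v a +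
      (αdiv + αchain + (N - 3) * αdisj) * ∑ x, v x := by
  rw [← outSum_comp_reverse, edgeCovariance_mulVec_comp_reverse, outSum_edgeCovariance_mulVec,
    outSum_comp_reverse, inSum_comp_reverse, sum_comp_reverse]
  ring

theorem sum_edgeCovariance_mulVec :
    ∑ x, (edgeCovariance N αrecip αconv αchain αdiv αdisj *ᵥ v) x =
      (1 + αrecip + (N - 2) * αconv + 2 * (N - 2) * αchain + (N - 2) * αdiv +
        (N - 2) * (N - 3) * αdisj) * ∑ x, v x := by
  rw [← sum_outSum]
  simp only [outSum_edgeCovariance_mulVec, Finset.sum_add_distrib, ← Finset.mul_sum, sum_outSum,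
    sum_inSum, Finset.sum_const, Finset.card_univ, Fintype.card_fin, nsmul_eq_mul]
  ring

variable {v} in
theorem marginalMatrix_mulVec_marginals (hsum : ∑ x, v x = 0) (a : Fin N) :
    marginalMatrix N αrecip αconv αchain αdiv αdisj *ᵥ ![outSum v a, inSum v a] =
      ![outSum (edgeCovariance N αrecip αconv αchain αdiv αdisj *ᵥ v) a,
        inSum (edgeCovariance N αrecip αconv αchain αdiv αdisj *ᵥ v) a] := by
  ext i
  fin_cases i <;>
  simp [marginalMatrix, Matrix.mulVec, outSum_edgeCovariance_mulVec, inSum_edgeCovariance_mulVec,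
    hsum]

variable (N) in
theorem half_trace_marginalMatrix :
    (marginalMatrix N αrecip αconv αchain αdiv αdisj).trace / 2 =
      1 + (N - 3) / 2 * αconv - αchain + (N - 3) / 2 * αdiv - (N - 3) * αdisj := by
  rw [marginalMatrix, Matrix.trace_fin_two_of]
  ring

variable (N) in
theorem discr_marginalMatrix :
    (marginalMatrix N αrecip αconv αchain αdiv αdisj).discr =
      N * (N - 2) * (αconv - αdiv) ^ 2 +
        (αconv + αdiv - 2 * (N - 3) * (αchain - αdisj) - 2 * αrecip) ^ 2 := by
  rw [Matrix.discr_fin_two, marginalMatrix, Matrix.trace_fin_two_of, Matrix.det_fin_two_of]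
  ring

end Covariance

section Eigenvectors

variable {N : ℕ} {αrecip αconv αchain αdiv αdisj μ : ℝ} {v : DEdge N → ℝ}

theorem eigenvalue_eq_of_sum_ne_zero
    (hv : edgeCovariance N αrecip αconv αchain αdiv αdisj *ᵥ v = μ • v) (hsum : ∑ x, v x ≠ 0) :
    μ = 1 + αrecip + (N - 2) * αconv + 2 * (N - 2) * αchain + (N - 2) * αdiv +
      (N - 2) * (N - 3) * αdisj := by
  apply mul_right_cancel₀ hsum
  rw [← sum_edgeCovariance_mulVec, hv, Finset.mul_sum]
  rfl

theorem mem_spectrum_marginalMatrix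
    (hv : edgeCovariance N αrecip αconv αchain αdiv αdisj *ᵥ v = μ • v) (hsum : ∑ x, v x = 0)
    {a : Fin N} (ha : ![outSum v a, inSum v a] ≠ 0) :
    μ ∈ spectrum ℝ (marginalMatrix N αrecip αconv αchain αdiv αdisj) := by
  refine mem_spectrum_iff_exists_mulVec_eq_smul.mpr ⟨_, ha, ?_⟩
  rw [marginalMatrix_mulVec_marginals _ _ _ _ _ hsum, hv, outSum_smul, inSum_smul]
  simp

theorem eigenvalue_eq_or_eq_of_marginals_eq_zero
    (hv : edgeCovariance N αrecip αconv αchain αdiv αdisj *ᵥ v = μ • v) (hv0 : v ≠ 0)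
    (hout : outSum v = 0) (hin : inSum v = 0) :
    μ = 1 - αrecip - αconv + 2 * αchain - αdiv ∨
      μ = 1 + αrecip - αconv - 2 * αchain - αdiv + 2 * αdisj := by
  have hsum : ∑ x, v x = 0 := by simp [← sum_outSum, hout]
  have heig (x : DEdge N) : μ * v x =
      (1 - αconv - αdiv + αdisj) * v x + (αrecip - 2 * αchain + αdisj) * v (reverse x) := by
    simpa [edgeCovariance_mulVec, hout, hin, hsum] using congrFun hv.symm x
  rcases eq_add_or_eq_sub_of_involutive (fun _ ↦ rfl) hv0 heig with h | h
  · exact .inr (by linear_combination h)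
  · exact .inl (by linear_combination h)

end Eigenvectors

theorem nykampZhao_spectrum_subset_general (N : ℕ) (αrecip αconv αchain αdiv αdisj : ℝ) :
    spectrum ℝ (edgeCovariance N αrecip αconv αchain αdiv αdisj) ⊆
      ({1 + αrecip + ((N : ℝ) - 2) * αconv + 2 * ((N : ℝ) - 2) * αchain +
          ((N : ℝ) - 2) * αdiv + ((N : ℝ) - 2) * ((N : ℝ) - 3) * αdisj,
        1 - αrecip - αconv + 2 * αchain - αdiv,
        1 + αrecip - αconv - 2 * αchain - αdiv + 2 * αdisj,
        1 + (((N : ℝ) - 3) / 2) * αconv - αchain + (((N : ℝ) - 3) / 2) * αdiv -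
          ((N : ℝ) - 3) * αdisj +
          Real.sqrt ((N : ℝ) * ((N : ℝ) - 2) * (αconv - αdiv) ^ 2 +
            (αconv + αdiv - 2 * ((N : ℝ) - 3) * (αchain - αdisj) - 2 * αrecip) ^ 2) / 2,
        1 + (((N : ℝ) - 3) / 2) * αconv - αchain + (((N : ℝ) - 3) / 2) * αdiv -
          ((N : ℝ) - 3) * αdisj -
          Real.sqrt ((N : ℝ) * ((N : ℝ) - 2) * (αconv - αdiv) ^ 2 +
            (αconv + αdiv - 2 * ((N : ℝ) - 3) * (αchain - αdisj) - 2 * αrecip) ^ 2) / 2} :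
        Set ℝ) := by
  intro μ hμ
  obtain ⟨v, hv0, hv⟩ := mem_spectrum_iff_exists_mulVec_eq_smul.mp hμ
  simp only [Set.mem_insert_iff, Set.mem_singleton_iff]
  by_cases hsum : ∑ x, v x = 0
  · right
    by_cases hmarg : ∃ a, ![outSum v a, inSum v a] ≠ 0
    · obtain ⟨a, ha⟩ := hmarg
      have hroots := eq_or_eq_of_mem_spectrum_fin_two (mem_spectrum_marginalMatrix hv hsum ha)
      rw [half_trace_marginalMatrix, discr_marginalMatrix] at hroots
      exact .inr (.inr hroots)
    · have hzero : outSum v = 0 ∧ inSum v = 0 := by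
        simpa [funext_iff, forall_and] using hmarg
      have hreversal := eigenvalue_eq_or_eq_of_marginals_eq_zero hv hv0 hzero.1 hzero.2
      tauto
  · exact .inl (eigenvalue_eq_of_sum_ne_zero hv hsum)

/-- every real eigenvalue of the Nykamp–Zhao covariance matrix
`Σ = Rid + αrecip • Rrecip + αconv • Rconv + αchain • (Rchain + Ranti) + αdiv • Rdiv
+ αdisj • Rdisj` lies in the five-element set `{λ₁, λ₂, λ₃, λ₄, λ₅}`. -/
theorem nykampZhao_spectrum_subset (N : ℕ) (hN : 5 ≤ N)
    (αrecip αconv αchain αdiv αdisj : ℝ) :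
    spectrum ℝ
        (Rid N + αrecip • Rrecip N + αconv • Rconv N + αchain • (Rchain N + Ranti N) +
          αdiv • Rdiv N + αdisj • Rdisj N) ⊆
      ({1 + αrecip + ((N : ℝ) - 2) * αconv + 2 * ((N : ℝ) - 2) * αchain +
          ((N : ℝ) - 2) * αdiv + ((N : ℝ) - 2) * ((N : ℝ) - 3) * αdisj,
        1 - αrecip - αconv + 2 * αchain - αdiv,
        1 + αrecip - αconv - 2 * αchain - αdiv + 2 * αdisj,
        1 + (((N : ℝ) - 3) / 2) * αconv - αchain + (((N : ℝ) - 3) / 2) * αdiv -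
          ((N : ℝ) - 3) * αdisj +
          Real.sqrt ((N : ℝ) * ((N : ℝ) - 2) * (αconv - αdiv) ^ 2 +
            (αconv + αdiv - 2 * ((N : ℝ) - 3) * (αchain - αdisj) - 2 * αrecip) ^ 2) / 2,
        1 + (((N : ℝ) - 3) / 2) * αconv - αchain + (((N : ℝ) - 3) / 2) * αdiv -
          ((N : ℝ) - 3) * αdisj -
          Real.sqrt ((N : ℝ) * ((N : ℝ) - 2) * (αconv - αdiv) ^ 2 +
            (αconv + αdiv - 2 * ((N : ℝ) - 3) * (αchain - αdisj) - 2 * αrecip) ^ 2) / 2} :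
        Set ℝ) := by
  exact nykampZhao_spectrum_subset_general N αrecip αconv αchain αdiv αdisj
end
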